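/- Let (V,E,∂) be a locally finite graph carrying two vertex-coupling families of boundary maps with energy structures (H_v, ι_v, h_v) and (H̃_v, ι̃_v, h̃_v). Let δ > 0, let J_v : H_v → H̃_v and J¹_v : H¹_v → H̃¹_v be bounded with sup_v ‖J_v‖ < ∞, sup_v ‖J¹_v‖ < ∞ and ‖ι̃_v(J¹_v f) − J_v(ι_v f)‖_{H̃_v} ≤ δ·‖f‖_{H¹_v} for all v and f ∈ H¹_v, and let B̃ be a smoothing operator for the coupled space H̃¹ such that ‖B̃(J^{1,dec} f)‖_{H̃^{1,dec}} ≤ δ·‖f‖_{H^{1,dec}} for all f ∈ H¹, where J^{1,dec} := ⊕_v J¹_v. Then J¹ := (id − B̃) ∘ J^{1,dec} maps the coupled space H¹ into the coupled space H̃¹, and for every f ∈ H¹: ‖ι̃^{dec}(J¹ f) − J(ι^{dec} f)‖_{⊕_v H̃_v} ≤ 2δ·‖f‖_{H^{1,dec}}, where J := ⊕_v J_v and ι^{dec}, ι̃^{dec} act componentwise. -/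

import Mathlib

/-- A locally finite graph: countable vertex set `V`, countable edge set `E`,
incidence map `bd e = (∂₋e, ∂₊e)`, no loops, and finitely many edges at each vertex. -/
structure LocallyFiniteGraph (V E : Type*) [Countable V] [Countable E] where
  bd : E → V × V
  no_loops : ∀ e, (bd e).1 ≠ (bd e).2
  locFin : ∀ v : V, {e : E | (bd e).1 = v ∨ (bd e).2 = v}.Finite

open scoped ENNReal

section Componentwise

variable {V : Type*} {p : ℝ≥0∞} {X Y Z : V → Type*} [∀ v, NormedAddCommGroup (X v)]
  [∀ v, NormedAddCommGroup (Y v)] [∀ v, NormedAddCommGroup (Z v)]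

theorem lp_norm_le_mul_norm_of_forall_le (hp : p ≠ 0) {C : ℝ} (hC : 0 ≤ C) {f : lp X p}
    {g : lp Y p} (h : ∀ v, ‖g v‖ ≤ C * ‖f v‖) : ‖g‖ ≤ C * ‖f‖ :=
  calc ‖g‖ ≤ ‖C • lp.toNorm f‖ :=
        lp.norm_mono hp fun v ↦ by simpa [lp.toNorm, abs_of_nonneg hC] using h v
    _ = C * ‖f‖ := by rw [lp.norm_const_smul hp, Real.norm_of_nonneg hC, lp.norm_toNorm]

/-- `T` is the `ℓᵖ`-direct sum `⊕_v t_v` of the family `t`. Being a predicate, it presupposes that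
`(t_v (f_v))_v` is `p`-summable for every `f`. -/
def IsComponentwise (T : lp X p → lp Y p) (t : ∀ v, X v → Y v) : Prop :=
  ∀ f v, T f v = t v (f v)

namespace IsComponentwise

theorem comp {S : lp Y p → lp Z p} {s : ∀ v, Y v → Z v} {T : lp X p → lp Y p}
    {t : ∀ v, X v → Y v} (hS : IsComponentwise S s) (hT : IsComponentwise T t) :
    IsComponentwise (S ∘ T) fun v ↦ s v ∘ t v :=
  fun f v ↦ (hS (T f) v).trans (congrArg (s v) (hT f v))

theorem sub {S T : lp X p → lp Y p} {s t : ∀ v, X v → Y v} (hS : IsComponentwise S s)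
    (hT : IsComponentwise T t) : IsComponentwise (S - T) (s - t) :=
  fun f v ↦ congrArg₂ (· - ·) (hS f v) (hT f v)

theorem norm_apply_le {T : lp X p → lp Y p} {t : ∀ v, X v → Y v} (hT : IsComponentwise T t)
    (hp : p ≠ 0) {C : ℝ} (hC : 0 ≤ C) (ht : ∀ v x, ‖t v x‖ ≤ C * ‖x‖) (f : lp X p) :
    ‖T f‖ ≤ C * ‖f‖ :=
  lp_norm_le_mul_norm_of_forall_le hp hC fun v ↦ (hT f v).symm ▸ ht v (f v)

end IsComponentwise

end Componentwise

section Coupling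

variable {𝕜 V E : Type*} [NormedField 𝕜] {p : ℝ≥0∞}

/-- The coupled space `H¹` inside the `ℓᵖ`-direct sum of the vertex spaces `X v`: the families whose
boundary values agree across every edge. Only the values `Γ v e` at the endpoints `v` of `e`
matter. -/
def coupledSpace (bd : E → V × V) {X : V → Type*} [∀ v, NormedAddCommGroup (X v)]
    [∀ v, NormedSpace 𝕜 (X v)] {B : E → Type*} [∀ e, AddCommGroup (B e)] [∀ e, Module 𝕜 (B e)]
    (Γ : ∀ v e, X v →ₗ[𝕜] B e) : Submodule 𝕜 (lp X p) where
  carrier := {f | ∀ e, Γ (bd e).1 e (f (bd e).1) = Γ (bd e).2 e (f (bd e).2)}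
  zero_mem' e := by simp
  add_mem' hf hg e := by simp [hf e, hg e]
  smul_mem' c f hf e := by simp [hf e]

theorem stmt13_general [Fact (1 ≤ p)] (bd : E → V × V)
    {X Y X' Y' : V → Type*} {B B' : E → Type*}
    [∀ v, NormedAddCommGroup (X v)] [∀ v, NormedSpace 𝕜 (X v)]
    [∀ v, NormedAddCommGroup (Y v)]
    [∀ v, NormedAddCommGroup (X' v)] [∀ v, NormedSpace 𝕜 (X' v)]
    [∀ v, NormedAddCommGroup (Y' v)] [∀ v, NormedSpace 𝕜 (Y' v)]
    [∀ e, AddCommGroup (B e)] [∀ e, Module 𝕜 (B e)]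
    [∀ e, AddCommGroup (B' e)] [∀ e, Module 𝕜 (B' e)]
    (Γ : ∀ v e, X v →ₗ[𝕜] B e) (Γ' : ∀ v e, X' v →ₗ[𝕜] B' e)
    {ι : ∀ v, X v → Y v} {ιdec : lp X p → lp Y p} (hιdec : IsComponentwise ιdec ι)
    {ι' : ∀ v, X' v → Y' v} {ιdec' : lp X' p →ₗ[𝕜] lp Y' p} (hιdec' : IsComponentwise ιdec' ι')
    {J₁ : ∀ v, X v → X' v} {Jdec : lp X p → lp X' p} (hJdec : IsComponentwise Jdec J₁)
    {J₀ : ∀ v, Y v → Y' v} {J : lp Y p → lp Y' p} (hJ : IsComponentwise J J₀)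
    {δ ε K : ℝ} (hδ : 0 ≤ δ) (hK : 0 ≤ K) (hι' : ∀ v u, ‖ι' v u‖ ≤ K * ‖u‖)
    (hclose : ∀ v f, ‖ι' v (J₁ v f) - J₀ v (ι v f)‖ ≤ δ * ‖f‖)
    {S : lp X' p → lp X' p} (hS_smooth : ∀ u, u - S u ∈ coupledSpace bd Γ')
    (hS_small : ∀ f ∈ coupledSpace bd Γ, ‖S (Jdec f)‖ ≤ ε * ‖f‖)
    {f : lp X p} (hf : f ∈ coupledSpace bd Γ) :
    Jdec f - S (Jdec f) ∈ coupledSpace bd Γ' ∧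
      ‖ιdec' (Jdec f - S (Jdec f)) - J (ιdec f)‖ ≤ (δ + K * ε) * ‖f‖ := by
  have hp : p ≠ 0 := (zero_lt_one.trans_le Fact.out).ne'
  have decoupled_close : ‖ιdec' (Jdec f) - J (ιdec f)‖ ≤ δ * ‖f‖ :=
    ((hιdec'.comp hJdec).sub (hJ.comp hιdec)).norm_apply_le hp hδ hclose f
  have correction_small : ‖ιdec' (S (Jdec f))‖ ≤ K * (ε * ‖f‖) :=
    (hιdec'.norm_apply_le hp hK hι' _).trans (mul_le_mul_of_nonneg_left (hS_small f hf) hK)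
  refine ⟨hS_smooth (Jdec f), ?_⟩
  calc ‖ιdec' (Jdec f - S (Jdec f)) - J (ιdec f)‖
      = ‖(ιdec' (Jdec f) - J (ιdec f)) - ιdec' (S (Jdec f))‖ := by rw [map_sub, sub_right_comm]
    _ ≤ ‖ιdec' (Jdec f) - J (ιdec f)‖ + ‖ιdec' (S (Jdec f))‖ := norm_sub_le _ _
    _ ≤ δ * ‖f‖ + K * (ε * ‖f‖) := add_le_add decoupled_close correction_small
    _ = (δ + K * ε) * ‖f‖ := by ring

end Coupling

/-- Two vertex-coupling families with energy structures
`(H_v, ι_v, h_v)` and `(H̃_v, ι̃_v, h̃_v)`; identification operators `J_v`, `J¹_v` with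
`‖ι̃_v(J¹_v f) − J_v(ι_v f)‖ ≤ δ‖f‖`, and a smoothing operator `B̃` for the coupled
space `H̃¹` with `‖B̃(J^{1,dec}f)‖ ≤ δ‖f‖` on `H¹`.  Then `J¹ = (id − B̃)∘J^{1,dec}` maps
`H¹` into `H̃¹` and `‖ι̃^{dec}(J¹f) − J(ι^{dec}f)‖ ≤ 2δ‖f‖` for every `f ∈ H¹`. -/
theorem stmt13 {V E : Type*} [Countable V] [Countable E]
    (G : LocallyFiniteGraph V E)
    -- first coupling family with energy structure
    (H1 : V → Type*) [∀ v, NormedAddCommGroup (H1 v)] [∀ v, InnerProductSpace ℂ (H1 v)]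
    [∀ v, CompleteSpace (H1 v)]
    (Gb : E → Type*) [∀ e, NormedAddCommGroup (Gb e)] [∀ e, InnerProductSpace ℂ (Gb e)]
    [∀ e, CompleteSpace (Gb e)]
    (Hv : V → Type*) [∀ v, NormedAddCommGroup (Hv v)] [∀ v, InnerProductSpace ℂ (Hv v)]
    [∀ v, CompleteSpace (Hv v)]
    (Γ : ∀ v, ∀ e, H1 v →L[ℂ] Gb e) (c : ℝ)
    (hc : ∀ v, ∀ f : H1 v,
      ∑ e ∈ (G.locFin v).toFinset, ‖Γ v e f‖ ^ 2 ≤ c ^ 2 * ‖f‖ ^ 2)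
    (ι : ∀ v, H1 v →L[ℂ] Hv v)
    (hι_inj : ∀ v, Function.Injective (ι v))
    (hι_contr : ∀ v, ∀ f : H1 v, ‖ι v f‖ ≤ ‖f‖)
    -- second (tilde) coupling family with energy structure
    (H1t : V → Type*) [∀ v, NormedAddCommGroup (H1t v)] [∀ v, InnerProductSpace ℂ (H1t v)]
    [∀ v, CompleteSpace (H1t v)]
    (Gbt : E → Type*) [∀ e, NormedAddCommGroup (Gbt e)] [∀ e, InnerProductSpace ℂ (Gbt e)]
    [∀ e, CompleteSpace (Gbt e)]
    (Hvt : V → Type*) [∀ v, NormedAddCommGroup (Hvt v)] [∀ v, InnerProductSpace ℂ (Hvt v)]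
    [∀ v, CompleteSpace (Hvt v)]
    (Γt : ∀ v, ∀ e, H1t v →L[ℂ] Gbt e) (ct : ℝ)
    (hct : ∀ v, ∀ u : H1t v,
      ∑ e ∈ (G.locFin v).toFinset, ‖Γt v e u‖ ^ 2 ≤ ct ^ 2 * ‖u‖ ^ 2)
    (ιt : ∀ v, H1t v →L[ℂ] Hvt v)
    (hιt_inj : ∀ v, Function.Injective (ιt v))
    (hιt_contr : ∀ v, ∀ u : H1t v, ‖ιt v u‖ ≤ ‖u‖)
    -- componentwise identification operators and their ℓ²-direct sums
    (J1 : ∀ v, H1 v →L[ℂ] H1t v) (cJ1 : ℝ) (hJ1 : ∀ v, ‖J1 v‖ ≤ cJ1)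
    (Jv : ∀ v, Hv v →L[ℂ] Hvt v) (cJ : ℝ) (hJv : ∀ v, ‖Jv v‖ ≤ cJ)
    (Jdec : lp H1 2 →L[ℂ] lp H1t 2)
    (hJdec : ∀ (f : lp H1 2) (v : V), Jdec f v = J1 v (f v))
    (J : lp Hv 2 →L[ℂ] lp Hvt 2)
    (hJ : ∀ (x : lp Hv 2) (v : V), J x v = Jv v (x v))
    (ιdec : lp H1 2 →L[ℂ] lp Hv 2)
    (hιdec : ∀ (f : lp H1 2) (v : V), ιdec f v = ι v (f v))
    (ιtdec : lp H1t 2 →L[ℂ] lp Hvt 2)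
    (hιtdec : ∀ (u : lp H1t 2) (v : V), ιtdec u v = ιt v (u v))
    (δ : ℝ) (hδ : 0 < δ)
    -- closeness of the componentwise identification operators
    (hclose : ∀ v, ∀ f : H1 v, ‖ιt v (J1 v f) - Jv v (ι v f)‖ ≤ δ * ‖f‖)
    -- the smoothing operator `B̃` for the tilde coupled space
    (Bt : lp H1t 2 →L[ℂ] lp H1t 2)
    (hBt_smooth : ∀ u : lp H1t 2, ∀ e,
      Γt (G.bd e).1 e ((u - Bt u) (G.bd e).1) = Γt (G.bd e).2 e ((u - Bt u) (G.bd e).2))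
    (hBt_small : ∀ f : lp H1 2,
      (∀ e, Γ (G.bd e).1 e (f (G.bd e).1) = Γ (G.bd e).2 e (f (G.bd e).2)) →
      ‖Bt (Jdec f)‖ ≤ δ * ‖f‖) :
    ∀ f : lp H1 2,
      (∀ e, Γ (G.bd e).1 e (f (G.bd e).1) = Γ (G.bd e).2 e (f (G.bd e).2)) →
      (∀ e, Γt (G.bd e).1 e ((Jdec f - Bt (Jdec f)) (G.bd e).1)
          = Γt (G.bd e).2 e ((Jdec f - Bt (Jdec f)) (G.bd e).2)) ∧
      ‖ιtdec (Jdec f - Bt (Jdec f)) - J (ιdec f)‖ ≤ 2 * δ * ‖f‖ := by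
  intro f hf
  have hιt_one : ∀ v u, ‖ιt v u‖ ≤ 1 * ‖u‖ := by simpa only [one_mul] using hιt_contr
  rw [show 2 * δ = δ + 1 * δ by ring]
  exact stmt13_general G.bd (fun v e ↦ (Γ v e).toLinearMap) (fun v e ↦ (Γt v e).toLinearMap)
    (ιdec' := ιtdec.toLinearMap) (ι' := fun v ↦ ιt v) hιdec hιtdec hJdec hJ
    hδ.le zero_le_one hιt_one hclose hBt_smooth hBt_small hf
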